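/- Let a be a real number with a ≥ 4 and let η, λ be real numbers with 0 < η < 1/(a−1). Suppose there exist real numbers x, y, z and positive real numbers α₁, α₂, β₁, β₂, γ₁, γ₂ satisfying the three vector equations in ℝ³: (0,0,0) = (x,y,z) + α₁·(−1,0,0) + α₂·(−1,−1,0); (1, η, η²) = (x,y,z) + β₁·(−1,0,0) + β₂·(2−a, 1, 1); and (λ, λη, λη²) = (x,y,z) + γ₁·(2−a, 1, 1) + γ₂·(a−2, a−1, 1). Then λ·(1 − (a−1)η) < 1 − η; in particular λ < (1−η)/(1−(a−1)η), so λ is bounded above in terms of a and η. (This shows the disconnected lattice path A−B−C−D|F for polytope family 20 contradicts the genericity of points in Mikhalkin position, from the proof of Lemma 4.10 in Appendix A.) -/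

import Mathlib

/-!
Each cell is tested with a linear form that vanishes on one or both of its rays. The form `z` kills
both rays of the first cell, so the vertex has height `0`; hence the forms `y - c z` all agree at
the vertex. For `c = 1` the form kills both rays of the second cell, so its value at the vertex
is its value `η (1 - η)` at the second point. For `c = a - 1` it kills the second ray of the third
cell and is negative on the first, so its value `λ η (1 - (a - 1) η)` at the third point is
smaller than at the vertex. Cancelling `η` gives the bound.
-/

theorem map_add_smul_add_smul_of_map_eq_zero {R M N : Type*} [Semiring R]
    [AddCommMonoid M] [AddCommMonoid N] [Module R M] [Module R N] {f : M →ₗ[R] N} {e : M}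
    (he : f e = 0) (v d : M) (s t : R) :
    f (v + s • d + t • e) = f v + s • f d := by
  simp only [map_add, map_smul, he, smul_zero, add_zero]

section SlopeForm

variable {R : Type*} [CommRing R]

/-- The linear form `(x, y, z) ↦ y - c z` on `R³`, with kernel the plane `y = c z` of slope `c`. It
serves to test on which side of a plane of this slope through the vertex a cell lies. -/
def slopeForm (c : R) : R × R × R →ₗ[R] R :=
  LinearMap.fst R R R ∘ₗ LinearMap.snd R R (R × R) -
    c • (LinearMap.snd R R R ∘ₗ LinearMap.snd R R (R × R))

theorem slopeForm_apply (c x y z : R) : slopeForm c (x, y, z) = y - c * z := rfl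

theorem slopeForm_moment (c t η : R) :
    slopeForm c (t, t * η, t * η ^ 2) = η * (t * (1 - c * η)) := by
  rw [slopeForm_apply]
  ring

end SlopeForm

theorem stmt_17_general {K : Type*} [Field K] [LinearOrder K] [IsStrictOrderedRing K]
    {a η lam α₁ α₂ β₁ β₂ γ₁ γ₂ : K} {v : K × K × K} (ha : 2 < a) (hη : 0 < η) (hγ₁ : 0 < γ₁)
    (h₁ : (0, 0, 0) = v + α₁ • (-1, 0, 0) + α₂ • (-1, -1, 0))
    (h₂ : (1, η, η ^ 2) = v + β₁ • (-1, 0, 0) + β₂ • (2 - a, 1, 1))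
    (h₃ : (lam, lam * η, lam * η ^ 2) = v + γ₁ • (2 - a, 1, 1) + γ₂ • (a - 2, a - 1, 1)) :
    lam * (1 - (a - 1) * η) < 1 - η ∧
      (η < 1 / (a - 1) → lam < (1 - η) / (1 - (a - 1) * η)) := by
  obtain ⟨x, y, z⟩ := v
  have height_eq_zero : z = 0 := by
    simpa using (congrArg (fun p => p.2.2) h₁).symm
  have second_eq : slopeForm 1 (1, η, η ^ 2) = slopeForm 1 (x, y, z) := by
    rw [h₂, map_add_smul_add_smul_of_map_eq_zero (by simp [slopeForm_apply])]
    simp [slopeForm_apply]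
  have third_lt : slopeForm (a - 1) (lam, lam * η, lam * η ^ 2) < slopeForm (a - 1) (x, y, z) := by
    have ray_neg : slopeForm (a - 1) (2 - a, 1, 1) < 0 := by
      rw [slopeForm_apply]
      linarith
    rw [h₃, map_add_smul_add_smul_of_map_eq_zero (by simp [slopeForm_apply])]
    exact add_lt_of_neg_right _ (mul_neg_of_pos_of_neg hγ₁ ray_neg)
  have scaled_bound : η * (lam * (1 - (a - 1) * η)) < η * (1 - η) :=
    calc η * (lam * (1 - (a - 1) * η))
        = slopeForm (a - 1) (lam, lam * η, lam * η ^ 2) := (slopeForm_moment ..).symm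
      _ < slopeForm (a - 1) (x, y, z) := third_lt
      _ = slopeForm 1 (x, y, z) := by simp only [slopeForm_apply, height_eq_zero, mul_zero]
      _ = slopeForm 1 (1, η, η ^ 2) := second_eq.symm
      _ = η * (1 - η) := by simpa using slopeForm_moment 1 1 η
  have bound := lt_of_mul_lt_mul_left scaled_bound hη.le
  refine ⟨bound, fun hη_lt => ?_⟩
  have slope_lt_one : (a - 1) * η < 1 := (lt_div_iff₀' (by linarith)).1 hη_lt
  exact (lt_div_iff₀ (sub_pos.2 slope_lt_one)).2 bound

/-- The disconnected lattice path A−B−C−D|F for polytope family 20 contradicts the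
genericity of points in Mikhalkin position (proof of Lemma 4.10 in Appendix A): if the
three points `(0,0,0)`, `(1,η,η²)`, `(λ,λη,λη²)` lie in the prescribed cells of a
tropical surface with vertex `(x,y,z)` dual to a polytope of family 20 with parameter
`a`, then `λ(1 − (a−1)η) < 1 − η`, so `λ` is bounded above in terms of `a` and `η`. -/
theorem stmt_17 (a η lam : ℝ) (ha : 4 ≤ a) (hη0 : 0 < η) (hη : η < 1 / (a - 1))
    (h : ∃ (x y z α₁ α₂ β₁ β₂ γ₁ γ₂ : ℝ),
      0 < α₁ ∧ 0 < α₂ ∧ 0 < β₁ ∧ 0 < β₂ ∧ 0 < γ₁ ∧ 0 < γ₂ ∧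
      -- (0,0,0) = (x,y,z) + α₁ (−1,0,0) + α₂ (−1,−1,0)
      (0 = x + α₁ * (-1) + α₂ * (-1) ∧
       0 = y + α₁ * 0 + α₂ * (-1) ∧
       0 = z + α₁ * 0 + α₂ * 0) ∧
      -- (1,η,η²) = (x,y,z) + β₁ (−1,0,0) + β₂ (2−a,1,1)
      (1 = x + β₁ * (-1) + β₂ * (2 - a) ∧
       η = y + β₁ * 0 + β₂ * 1 ∧
       η ^ 2 = z + β₁ * 0 + β₂ * 1) ∧
      -- (λ,λη,λη²) = (x,y,z) + γ₁ (2−a,1,1) + γ₂ (a−2,a−1,1)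
      (lam = x + γ₁ * (2 - a) + γ₂ * (a - 2) ∧
       lam * η = y + γ₁ * 1 + γ₂ * (a - 1) ∧
       lam * η ^ 2 = z + γ₁ * 1 + γ₂ * 1)) :
    lam * (1 - (a - 1) * η) < 1 - η ∧ lam < (1 - η) / (1 - (a - 1) * η) := by
  obtain ⟨x, y, z, α₁, α₂, β₁, β₂, γ₁, γ₂, -, -, -, -, hγ₁, -,
    ⟨hx₁, hy₁, hz₁⟩, ⟨hx₂, hy₂, hz₂⟩, ⟨hx₃, hy₃, hz₃⟩⟩ := h
  exact (stmt_17_general (v := (x, y, z)) (by linarith) hη0 hγ₁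
    (Prod.ext hx₁ (Prod.ext hy₁ hz₁)) (Prod.ext hx₂ (Prod.ext hy₂ hz₂))
    (Prod.ext hx₃ (Prod.ext hy₃ hz₃))).imp_right (· hη)
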